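/- The Frenkel–Turaev summation formula (case N=1): for |p|<1, |q|<1 and parameters t_0,…,t_5 ∈ ℂ* with ∏_{m=0}^5 t_m = q and t_4 t_5 = q^{-1}, one has 1 + [θ(t_5² q²;p)/θ(t_5²;p)] · ∏_{m=0}^5 [θ(t_m t_5;p)/θ(q t_5/t_m;p)] · q = θ(q t_5²;p)θ(q/(t_1t_2);p)θ(q/(t_1t_3);p)θ(q/(t_2t_3);p) / (θ(q/(t_1t_2t_3t_5);p)θ(q t_5/t_1;p)θ(q t_5/t_2;p)θ(q t_5/t_3;p)), assuming all denominators are nonzero. -/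

import Mathlib

noncomputable def qPochhammerInf (z q : ℂ) : ℂ := ∏' j : ℕ, (1 - z * q ^ j)

noncomputable def theta (z p : ℂ) : ℂ :=
  ∏' j : ℕ, (1 - z * p ^ j) * (1 - p ^ (j + 1) * z⁻¹)

noncomputable def ellGamma (z p q : ℂ) : ℂ :=
  ∏' jk : ℕ × ℕ,
    (1 - z⁻¹ * p ^ (jk.1 + 1) * q ^ (jk.2 + 1)) / (1 - z * p ^ jk.1 * q ^ jk.2)

open Filter Topology

section BilateralSeries

/-- The general term of the bilateral theta series. -/
noncomputable def thetaTerm (p z : ℂ) (k : ℤ) : ℂ := p ^ (k * (k - 1) / 2) * z ^ k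

/-- The bilateral theta series `∑ p ^ (k (k - 1) / 2) * z ^ k` over the integers. -/
noncomputable def thetaSeries (p z : ℂ) : ℂ := ∑' k : ℤ, thetaTerm p z k

lemma two_mul_triangular (k : ℤ) : 2 * (k * (k - 1) / 2) = k * (k - 1) :=
  Int.mul_ediv_cancel' (Int.even_mul_pred_self k).two_dvd

lemma thetaTerm_succ {p z : ℂ} (hp0 : p ≠ 0) (hz : z ≠ 0) (k : ℤ) :
    thetaTerm p z (k + 1) = thetaTerm p z k * (p ^ k * z) := by
  have h : (k + 1) * (k + 1 - 1) / 2 = k * (k - 1) / 2 + k := by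
    have h1 := two_mul_triangular k
    have h2 := two_mul_triangular (k + 1)
    linarith
  simp only [thetaTerm]
  rw [h, zpow_add₀ hp0, zpow_add_one₀ hz]
  ring

lemma summable_norm_of_ratio {p w : ℂ} (hp : ‖p‖ < 1) {f : ℕ → ℂ} (hf : ∀ n, f n ≠ 0)
    (h : ∀ n, f (n + 1) = f n * (p ^ n * w)) : Summable fun n ↦ ‖f n‖ := by
  refine summable_of_ratio_test_tendsto_lt_one zero_lt_one (.of_forall fun n ↦ by simpa using hf n) ?_
  have h0 : Tendsto (fun n : ℕ ↦ ‖p‖ ^ n * ‖w‖) atTop (𝓝 0) := by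
    simpa using (tendsto_pow_atTop_nhds_zero_of_lt_one (norm_nonneg p) hp).mul_const ‖w‖
  refine h0.congr fun n ↦ ?_
  have := norm_ne_zero_iff.mpr (hf n)
  rw [h n]
  simp only [norm_norm, norm_mul, norm_pow]
  field_simp

lemma thetaTerm_ne_zero {p z : ℂ} (hp0 : p ≠ 0) (hz : z ≠ 0) (k : ℤ) : thetaTerm p z k ≠ 0 :=
  mul_ne_zero (zpow_ne_zero _ hp0) (zpow_ne_zero _ hz)

lemma summable_norm_thetaTerm {p z : ℂ} (hp : ‖p‖ < 1) (hp0 : p ≠ 0) (hz : z ≠ 0) :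
    Summable fun k ↦ ‖thetaTerm p z k‖ := by
  refine Summable.of_nat_of_neg ?_ ?_
  · refine summable_norm_of_ratio (w := z) hp (fun n ↦ thetaTerm_ne_zero hp0 hz n) fun n ↦ ?_
    simpa using thetaTerm_succ hp0 hz n
  · refine summable_norm_of_ratio (w := p * z⁻¹) hp (fun n ↦ thetaTerm_ne_zero hp0 hz (-n))
      fun n ↦ ?_
    have h := thetaTerm_succ hp0 hz (-((n : ℤ) + 1))
    rw [show -((n : ℤ) + 1) + 1 = -n by ring, zpow_neg, zpow_add_one₀ hp0, zpow_natCast] at h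
    push_cast
    rw [h]
    field_simp

lemma hasSum_thetaTerm {p z : ℂ} (hp : ‖p‖ < 1) (hp0 : p ≠ 0) (hz : z ≠ 0) :
    HasSum (thetaTerm p z) (thetaSeries p z) :=
  (summable_norm_thetaTerm hp hp0 hz).of_norm.hasSum

lemma thetaSeries_inv {p z : ℂ} (hz : z ≠ 0) :
    thetaSeries p z⁻¹ = thetaSeries p z / z := by
  simp only [thetaSeries]
  rw [← (Equiv.subLeft (1 : ℤ)).tsum_eq (thetaTerm p z), ← tsum_div_const]
  refine tsum_congr fun k ↦ ?_
  simp only [Equiv.subLeft_apply, thetaTerm]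
  rw [show (1 - k) * (1 - k - 1) = k * (k - 1) by ring, zpow_sub₀ hz, inv_zpow, zpow_one]
  field_simp

lemma thetaSeries_mul_base {p z : ℂ} (hp0 : p ≠ 0) (hz : z ≠ 0) :
    thetaSeries p (p * z) = thetaSeries p z / z := by
  simp only [thetaSeries]
  rw [← (Equiv.addRight (1 : ℤ)).tsum_eq (thetaTerm p z), ← tsum_div_const]
  refine tsum_congr fun k ↦ ?_
  simp only [Equiv.coe_addRight]
  rw [thetaTerm_succ hp0 hz]
  simp only [thetaTerm, mul_zpow]
  field_simp

lemma thetaSeries_sq_mul_inv {p z : ℂ} (hp0 : p ≠ 0) (hz : z ≠ 0) :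
    thetaSeries (p ^ 2) (p * z⁻¹) = thetaSeries (p ^ 2) (p * z) := by
  have h : p * z⁻¹ = p ^ 2 * (p * z)⁻¹ := by field_simp
  rw [h, thetaSeries_mul_base (by positivity) (by positivity), thetaSeries_inv (by positivity)]
  field_simp

lemma sq_zpow_triangular {p : ℂ} (k : ℤ) : (p ^ 2) ^ (k * (k - 1) / 2) = p ^ (k * (k - 1)) := by
  rw [← zpow_natCast p 2, ← zpow_mul]
  congr 1
  exact_mod_cast two_mul_triangular k

lemma thetaTerm_mul_even {p u v : ℂ} (hp0 : p ≠ 0) (hu : u ≠ 0) (hv : v ≠ 0) (a b : ℤ) :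
    thetaTerm p u (a + b) * thetaTerm p v (a - b) =
      thetaTerm (p ^ 2) (u * v) a * thetaTerm (p ^ 2) (p * (u / v)) b := by
  have h : (a + b) * (a + b - 1) / 2 + (a - b) * (a - b - 1) / 2 = a * (a - 1) + b * (b - 1) + b := by
    have h1 := two_mul_triangular (a + b)
    have h2 := two_mul_triangular (a - b)
    linarith
  simp only [thetaTerm, sq_zpow_triangular, mul_zpow, div_zpow]
  rw [mul_mul_mul_comm, ← zpow_add₀ hp0, h, zpow_add₀ hp0, zpow_add₀ hp0, zpow_add₀ hu,
    zpow_sub₀ hv]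
  ring

lemma thetaTerm_mul_odd {p u v : ℂ} (hp0 : p ≠ 0) (hu : u ≠ 0) (hv : v ≠ 0) (a b : ℤ) :
    thetaTerm p u (a + b + 1) * thetaTerm p v (a - b) =
      u * (thetaTerm (p ^ 2) (p * (u * v)) a * thetaTerm (p ^ 2) (p ^ 2 * (u / v)) b) := by
  rw [thetaTerm_succ hp0 hu, mul_right_comm, thetaTerm_mul_even hp0 hu hv]
  have h : (p ^ 2) ^ b = p ^ b * p ^ b := by rw [pow_two, mul_zpow]
  simp only [thetaTerm, mul_zpow, h]
  rw [zpow_add₀ hp0]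
  ring

lemma isCompl_range_parity :
    IsCompl (Set.range fun x : ℤ × ℤ ↦ (x.1 + x.2, x.1 - x.2))
      (Set.range fun x : ℤ × ℤ ↦ (x.1 + x.2 + 1, x.1 - x.2)) := by
  refine ⟨Set.disjoint_iff.mpr ?_, codisjoint_iff.mpr ?_⟩
  · rintro _ ⟨⟨⟨a, b⟩, rfl⟩, ⟨⟨c, d⟩, h⟩⟩
    simp only [Prod.mk.injEq] at h
    omega
  · refine Set.eq_univ_of_forall ?_
    rintro ⟨n, m⟩
    rcases Int.even_or_odd' (n + m) with ⟨a, h | h⟩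
    · exact Or.inl ⟨(a, n - a), by ext <;> simp; omega⟩
    · exact Or.inr ⟨(a, n - 1 - a), by ext <;> simp; omega⟩

lemma hasSum_of_isCompl_range {α β γ : Type*} {f : γ → ℂ} {g : α → γ} {h : β → γ} {a b : ℂ}
    (hg : Function.Injective g) (hh : Function.Injective h)
    (hc : IsCompl (Set.range g) (Set.range h)) (hfg : HasSum (f ∘ g) a) (hfh : HasSum (f ∘ h) b) :
    HasSum f (a + b) :=
  HasSum.add_isCompl hc (hg.hasSum_range_iff.mpr hfg) (hh.hasSum_range_iff.mpr hfh)

lemma hasSum_thetaTerm_mul_thetaTerm {p z w : ℂ} (hp : ‖p‖ < 1) (hp0 : p ≠ 0) (hz : z ≠ 0)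
    (hw : w ≠ 0) :
    HasSum (fun x : ℤ × ℤ ↦ thetaTerm p z x.1 * thetaTerm p w x.2)
      (thetaSeries p z * thetaSeries p w) :=
  (hasSum_thetaTerm hp hp0 hz).mul (hasSum_thetaTerm hp hp0 hw)
    (summable_mul_of_summable_norm (summable_norm_thetaTerm hp hp0 hz)
      (summable_norm_thetaTerm hp hp0 hw))

/-- The product of two theta series decomposes according to the parity of the sum of the
summation indices. -/
lemma thetaSeries_mul_thetaSeries {p u v : ℂ} (hp : ‖p‖ < 1) (hp0 : p ≠ 0) (hu : u ≠ 0)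
    (hv : v ≠ 0) :
    thetaSeries p u * thetaSeries p v =
      thetaSeries (p ^ 2) (u * v) * thetaSeries (p ^ 2) (p * (u / v)) +
        v * thetaSeries (p ^ 2) (p * (u * v)) * thetaSeries (p ^ 2) (u / v) := by
  have hp2 : ‖p ^ 2‖ < 1 := by
    rw [norm_pow]
    exact pow_lt_one₀ (norm_nonneg p) hp two_ne_zero
  have hp20 : p ^ 2 ≠ 0 := pow_ne_zero 2 hp0
  have huv : u * v ≠ 0 := mul_ne_zero hu hv
  have hdiv : u / v ≠ 0 := div_ne_zero hu hv
  have heven := hasSum_thetaTerm_mul_thetaTerm hp2 hp20 huv (mul_ne_zero hp0 hdiv)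
  have hodd := (hasSum_thetaTerm_mul_thetaTerm hp2 hp20 (mul_ne_zero hp0 huv)
    (mul_ne_zero hp20 hdiv)).mul_left u
  simp only [← thetaTerm_mul_even hp0 hu hv] at heven
  simp only [← thetaTerm_mul_odd hp0 hu hv] at hodd
  have inj1 : Function.Injective fun x : ℤ × ℤ ↦ (x.1 + x.2, x.1 - x.2) := by
    rintro ⟨a, b⟩ ⟨c, d⟩ h
    simp only [Prod.mk.injEq] at h ⊢
    omega
  have inj2 : Function.Injective fun x : ℤ × ℤ ↦ (x.1 + x.2 + 1, x.1 - x.2) := by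
    rintro ⟨a, b⟩ ⟨c, d⟩ h
    simp only [Prod.mk.injEq] at h ⊢
    omega
  have hsum := hasSum_of_isCompl_range
    (f := fun x : ℤ × ℤ ↦ thetaTerm p u x.1 * thetaTerm p v x.2)
    inj1 inj2 isCompl_range_parity heven hodd
  rw [(hasSum_thetaTerm_mul_thetaTerm hp hp0 hu hv).unique hsum, thetaSeries_mul_base hp20 hdiv]
  field_simp

end BilateralSeries

section TripleProduct

/-- The finite product `(1 - p) (1 - p ^ 2) ⋯ (1 - p ^ n)`. -/
noncomputable def eulerProd (p : ℂ) (n : ℕ) : ℂ := ∏ i ∈ Finset.range n, (1 - p ^ (i + 1))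

/-- The reciprocal of `eulerProd`, extended by zero to negative integers. -/
noncomputable def eulerProdInv (p : ℂ) (k : ℤ) : ℂ :=
  if 0 ≤ k then (eulerProd p k.toNat)⁻¹ else 0

lemma one_sub_pow_succ_ne_zero {p : ℂ} (hp : ‖p‖ < 1) (i : ℕ) : 1 - p ^ (i + 1) ≠ 0 := by
  intro h
  have h1 : ‖p ^ (i + 1)‖ < 1 := by
    rw [norm_pow]
    exact pow_lt_one₀ (norm_nonneg p) hp i.succ_ne_zero
  rw [← sub_eq_zero.mp h, norm_one] at h1
  exact lt_irrefl _ h1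

lemma eulerProd_ne_zero {p : ℂ} (hp : ‖p‖ < 1) (n : ℕ) : eulerProd p n ≠ 0 :=
  Finset.prod_ne_zero_iff.mpr fun i _ ↦ one_sub_pow_succ_ne_zero hp i

lemma eulerProdInv_sub_one {p : ℂ} (hp : ‖p‖ < 1) (k : ℤ) :
    eulerProdInv p (k - 1) = (1 - p ^ k) * eulerProdInv p k := by
  rcases lt_trichotomy k 0 with hk | rfl | hk
  · simp [eulerProdInv, not_le.mpr hk, show ¬ (1 ≤ k) by omega]
  · simp [eulerProdInv]
  · obtain ⟨n, rfl⟩ : ∃ n : ℕ, k = n + 1 := ⟨(k - 1).toNat, by omega⟩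
    have h1 := one_sub_pow_succ_ne_zero hp n
    have h2 := eulerProd_ne_zero hp n
    have h3 : eulerProd p (n + 1) = eulerProd p n * (1 - p ^ (n + 1)) := Finset.prod_range_succ _ _
    have h4 : ((n : ℤ) + 1).toNat = n + 1 := by omega
    have h5 : (0 : ℤ) ≤ n + 1 := by omega
    have h6 : p ^ ((n : ℤ) + 1) = p ^ (n + 1) := by exact_mod_cast zpow_natCast p (n + 1)
    simp only [eulerProdInv, add_sub_cancel_right, h4, h5, h6, h3, if_true, Int.toNat_natCast,
      Int.natCast_nonneg]
    field_simp

lemma exists_tendsto_eulerProd {p : ℂ} (hp : ‖p‖ < 1) :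
    ∃ L : ℂ, L ≠ 0 ∧ Tendsto (eulerProd p) atTop (𝓝 L) := by
  have hs : Summable fun n : ℕ ↦ ‖-p ^ (n + 1)‖ := by
    simpa [norm_pow] using
      (summable_nat_add_iff 1).mpr (summable_geometric_of_lt_one (norm_nonneg p) hp)
  refine ⟨∏' n : ℕ, (1 + -p ^ (n + 1)), ?_, ?_⟩
  · refine tprod_one_add_ne_zero_of_summable (fun n ↦ ?_) hs
    simpa [sub_eq_add_neg] using one_sub_pow_succ_ne_zero hp n
  · simpa [eulerProd, sub_eq_add_neg, Function.comp_def] using!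
      (multipliable_one_add_of_summable hs).tendsto_prod_tprod_nat

/-- The finite form of the Jacobi triple product identity. -/
lemma hasSum_finite_tripleProduct {p z : ℂ} (hp : ‖p‖ < 1) (hp0 : p ≠ 0) (hz : z ≠ 0) (N : ℕ) :
    HasSum (fun k : ℤ ↦ eulerProd p (2 * N) * eulerProdInv p (N - k) * eulerProdInv p (N + k) *
        thetaTerm p (-z) k)
      (∏ j ∈ Finset.range N, (1 - z * p ^ j) * (1 - p ^ (j + 1) * z⁻¹)) := by
  have hz' : -z ≠ 0 := neg_ne_zero.mpr hz
  induction N with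
  | zero =>
    convert hasSum_single (0 : ℤ) ?_ using 1
    · simp [eulerProd, eulerProdInv, thetaTerm]
    · intro k hk
      rcases lt_or_gt_of_ne hk with h | h
      · simp [eulerProdInv, not_le.mpr h]
      · simp [eulerProdInv, not_le.mpr h]
  | succ N ih =>
    rw [Finset.prod_range_succ]
    set S := ∏ j ∈ Finset.range N, (1 - z * p ^ j) * (1 - p ^ (j + 1) * z⁻¹)
    have hdown := (Equiv.subRight (1 : ℤ)).hasSum_iff.mpr ih
    have hup := (Equiv.addRight (1 : ℤ)).hasSum_iff.mpr ih
    have h := ((ih.mul_left (1 + p ^ (2 * N + 1))).sub (hdown.mul_left (z * p ^ N))).sub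
      (hup.mul_left (p ^ (N + 1) * z⁻¹))
    have hval : S * ((1 - z * p ^ N) * (1 - p ^ (N + 1) * z⁻¹)) =
        (1 + p ^ (2 * N + 1)) * S - z * p ^ N * S - p ^ (N + 1) * z⁻¹ * S := by
      field_simp
      ring
    rw [hval]
    refine (congrArg (fun f : ℤ → ℂ ↦ HasSum f _) (funext fun k ↦ ?_)).mpr h
    have e1 : ((N + 1 : ℕ) : ℤ) - k = N - (k - 1) := by push_cast; ring
    have e2 : ((N + 1 : ℕ) : ℤ) + k = N + (k + 1) := by push_cast; ring
    have r1 := eulerProdInv_sub_one hp (N - (k - 1))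
    have r2 := eulerProdInv_sub_one hp (N - (k - 1) - 1)
    have r3 := eulerProdInv_sub_one hp (N + (k + 1))
    have r4 := eulerProdInv_sub_one hp (N + (k + 1) - 1)
    have t1 := thetaTerm_succ hp0 hz' k
    have t2 := thetaTerm_succ hp0 hz' (k - 1)
    have hQ : eulerProd p (2 * (N + 1)) =
        eulerProd p (2 * N) * (1 - p ^ (2 * N + 1)) * (1 - p ^ (2 * N + 2)) := by
      rw [show 2 * (N + 1) = 2 * N + 1 + 1 by ring, eulerProd, Finset.prod_range_succ,
        Finset.prod_range_succ]
      rfl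
    rw [r1] at r2
    rw [r3] at r4
    rw [show (N : ℤ) - (k - 1) - 1 = N - k by ring] at r1 r2
    rw [show (N : ℤ) + (k + 1) - 1 = N + k by ring] at r3 r4
    rw [show (N : ℤ) - k - 1 = N - (k + 1) by ring] at r2
    rw [show (N : ℤ) + k - 1 = N + (k - 1) by ring] at r4
    rw [sub_add_cancel] at t2
    simp only [Function.comp_apply, Equiv.subRight_apply, Equiv.coe_addRight]
    rw [e1, e2, hQ, r1, r2, r3, r4, t1, t2]
    simp only [zpow_sub₀ hp0, zpow_add₀ hp0, zpow_natCast, zpow_one]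
    have hk : p ^ k ≠ 0 := zpow_ne_zero k hp0
    field_simp
    ring

lemma multipliable_theta {p : ℂ} (hp : ‖p‖ < 1) (z : ℂ) :
    Multipliable fun j : ℕ ↦ (1 - z * p ^ j) * (1 - p ^ (j + 1) * z⁻¹) := by
  have hg := summable_geometric_of_lt_one (norm_nonneg p) hp
  have h1 : Summable fun j : ℕ ↦ ‖-(z * p ^ j)‖ := by
    simpa [norm_pow] using hg.mul_left ‖z‖
  have h2 : Summable fun j : ℕ ↦ ‖-(p ^ (j + 1) * z⁻¹)‖ := by
    simpa [norm_pow] using ((summable_nat_add_iff 1).mpr hg).mul_right ‖z‖⁻¹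
  simpa [sub_eq_add_neg] using!
    (multipliable_one_add_of_summable h1).mul (multipliable_one_add_of_summable h2)

/-- The Jacobi triple product identity, with an unspecified nonzero constant. -/
lemma exists_mul_theta_eq_thetaSeries {p : ℂ} (hp : ‖p‖ < 1) (hp0 : p ≠ 0) :
    ∃ K : ℂ, K ≠ 0 ∧ ∀ z, z ≠ 0 → theta z p = K * thetaSeries p (-z) := by
  obtain ⟨L, hL, hlim⟩ := exists_tendsto_eulerProd hp
  refine ⟨L⁻¹, inv_ne_zero hL, fun z hz ↦ ?_⟩
  obtain ⟨A, hA⟩ := hlim.norm.bddAbove_range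
  obtain ⟨B, hB⟩ := (hlim.inv₀ hL).norm.bddAbove_range
  replace hA n : ‖eulerProd p n‖ ≤ A := hA ⟨n, rfl⟩
  replace hB n : ‖(eulerProd p n)⁻¹‖ ≤ B := hB ⟨n, rfl⟩
  have hA0 : 0 ≤ A := (norm_nonneg _).trans (hA 0)
  have hB0 : 0 ≤ B := (norm_nonneg _).trans (hB 0)
  have hB' k : ‖eulerProdInv p k‖ ≤ B := by
    rw [eulerProdInv]
    split_ifs
    · exact hB _
    · simpa using hB0
  have hinv {f : ℕ → ℤ} (hf : Tendsto f atTop atTop) :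
      Tendsto (fun n ↦ eulerProdInv p (f n)) atTop (𝓝 L⁻¹) := by
    have htoNat : Tendsto (fun n ↦ (f n).toNat) atTop atTop :=
      tendsto_atTop.mpr fun b ↦ (hf.eventually_ge_atTop (b : ℤ)).mono fun n hn ↦ by omega
    refine ((hlim.inv₀ hL).comp htoNat).congr' ?_
    filter_upwards [hf.eventually_ge_atTop 0] with n hn
    simp [eulerProdInv, hn]
  have hseries : Tendsto (fun N : ℕ ↦ ∑' k : ℤ, eulerProd p (2 * N) * eulerProdInv p (N - k) *
      eulerProdInv p (N + k) * thetaTerm p (-z) k) atTop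
      (𝓝 (∑' k : ℤ, L⁻¹ * thetaTerm p (-z) k)) := by
    refine tendsto_tsum_of_dominated_convergence
      ((summable_norm_thetaTerm hp hp0 (neg_ne_zero.mpr hz)).mul_left (A * B * B))
      (fun k ↦ ?_) (.of_forall fun N k ↦ ?_)
    · have h1 : Tendsto (fun N : ℕ ↦ (N : ℤ) - k) atTop atTop :=
        tendsto_atTop_add_const_right _ (-k) tendsto_natCast_atTop_atTop
      have h2 : Tendsto (fun N : ℕ ↦ (N : ℤ) + k) atTop atTop :=
        tendsto_atTop_add_const_right _ k tendsto_natCast_atTop_atTop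
      have h3 : Tendsto (fun N : ℕ ↦ 2 * N) atTop atTop :=
        tendsto_id.const_mul_atTop' two_pos
      have h := (((hlim.comp h3).mul (hinv h1)).mul (hinv h2)).mul_const (thetaTerm p (-z) k)
      rwa [mul_inv_cancel₀ hL, one_mul] at h
    · simp only [norm_mul]
      gcongr
      exacts [hA _, hB' _, hB' _]
  simp only [(hasSum_finite_tripleProduct hp hp0 hz _).tsum_eq, tsum_mul_left] at hseries
  exact tendsto_nhds_unique (multipliable_theta hp z).tendsto_prod_tprod_nat hseries

end TripleProduct

lemma theta_zero_right (z : ℂ) : theta z 0 = 1 - z := by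
  rw [theta, tprod_eq_mulSingle 0]
  · simp
  · intro j hj
    simp [hj]

lemma theta_inv {p z : ℂ} (hp : ‖p‖ < 1) (hz : z ≠ 0) : theta z⁻¹ p = -theta z p / z := by
  rcases eq_or_ne p 0 with rfl | hp0
  · rw [theta_zero_right, theta_zero_right]
    field_simp
    ring
  · obtain ⟨K, -, hK⟩ := exists_mul_theta_eq_thetaSeries hp hp0
    rw [hK _ hz, hK _ (inv_ne_zero hz), ← inv_neg, thetaSeries_inv (neg_ne_zero.mpr hz)]
    field_simp

lemma exists_theta_mul_theta {p : ℂ} (hp : ‖p‖ < 1) :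
    ∃ F G : ℂ → ℂ, (∀ w, w ≠ 0 → F w⁻¹ = F w / w) ∧ (∀ w, w ≠ 0 → G w⁻¹ = G w) ∧
      ∀ u v, u ≠ 0 → v ≠ 0 →
        theta u p * theta v p = F (u * v) * G (u / v) - v * G (u * v) * F (u / v) := by
  rcases eq_or_ne p 0 with rfl | hp0
  · refine ⟨fun w ↦ 1 + w, fun _ ↦ 1, fun w hw ↦ ?_, fun _ _ ↦ rfl, fun u v hu hv ↦ ?_⟩
    · field_simp
      ring
    · rw [theta_zero_right, theta_zero_right]
      field_simp
      ring
  · obtain ⟨K, -, hK⟩ := exists_mul_theta_eq_thetaSeries hp hp0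
    refine ⟨fun w ↦ K * thetaSeries (p ^ 2) w, fun w ↦ K * thetaSeries (p ^ 2) (p * w),
      fun w hw ↦ ?_, fun w hw ↦ ?_, fun u v hu hv ↦ ?_⟩
    · simp only [thetaSeries_inv hw, mul_div_assoc]
    · simp only [thetaSeries_sq_mul_inv hp0 hw]
    · have h := thetaSeries_mul_thetaSeries hp hp0 (neg_ne_zero.mpr hu) (neg_ne_zero.mpr hv)
      rw [neg_mul_neg, neg_div_neg_eq] at h
      rw [hK u hu, hK v hv]
      linear_combination K ^ 2 * h

/-- The three-term Weierstrass addition formula. -/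
lemma theta_addition {p q u a b c : ℂ} (hp : ‖p‖ < 1) (hq : q ≠ 0) (hu : u ≠ 0) (ha : a ≠ 0)
    (hb : b ≠ 0) (hc : c ≠ 0) :
    theta (a * b * c * u / q) p * theta (q * u / a) p * (theta (q * u / b) p * theta (q * u / c) p) -
        theta (q ^ 2 * u / (a * b * c)) p * theta (a * u) p * (theta (b * u) p * theta (c * u) p) =
      -(a * b * c * u / q) * (theta (q * u ^ 2) p * theta (q / (b * c)) p *
        (theta (q / (a * b)) p * theta (q / (a * c)) p)) := by
  obtain ⟨F, G, hF, hG, h⟩ := exists_theta_mul_theta hp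
  have hC : q ^ 2 / (a ^ 2 * b * c) ≠ 0 := by positivity
  have hD : c / b ≠ 0 := by positivity
  rw [h _ _ (by positivity) (by positivity), h _ _ (by positivity) (by positivity),
    h _ _ (by positivity) (by positivity), h _ _ (by positivity) (by positivity),
    h _ _ (by positivity) (by positivity), h _ _ (by positivity) (by positivity),
    show a * b * c * u / q * (q * u / a) = b * c * u ^ 2 by field_simp,
    show a * b * c * u / q / (q * u / a) = (q ^ 2 / (a ^ 2 * b * c))⁻¹ by field_simp,
    show q * u / b * (q * u / c) = q ^ 2 * u ^ 2 / (b * c) by field_simp,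
    show q * u / b / (q * u / c) = c / b by field_simp,
    show q ^ 2 * u / (a * b * c) * (a * u) = q ^ 2 * u ^ 2 / (b * c) by field_simp,
    show q ^ 2 * u / (a * b * c) / (a * u) = q ^ 2 / (a ^ 2 * b * c) by field_simp,
    show b * u * (c * u) = b * c * u ^ 2 by ring,
    show b * u / (c * u) = (c / b)⁻¹ by field_simp,
    show q * u ^ 2 * (q / (b * c)) = q ^ 2 * u ^ 2 / (b * c) by field_simp,
    show q * u ^ 2 / (q / (b * c)) = b * c * u ^ 2 by field_simp,
    show q / (a * b) * (q / (a * c)) = q ^ 2 / (a ^ 2 * b * c) by field_simp,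
    show q / (a * b) / (q / (a * c)) = c / b by field_simp,
    hF _ hC, hG _ hC, hF _ hD, hG _ hD]
  generalize F (b * c * u ^ 2) = x1
  generalize G (b * c * u ^ 2) = x2
  generalize F (q ^ 2 * u ^ 2 / (b * c)) = x3
  generalize G (q ^ 2 * u ^ 2 / (b * c)) = x4
  generalize F (q ^ 2 / (a ^ 2 * b * c)) = x5
  generalize G (q ^ 2 / (a ^ 2 * b * c)) = x6
  generalize F (c / b) = x7
  generalize G (c / b) = x8
  field_simp
  ring

theorem frenkel_turaev_N1 (p q t0 t1 t2 t3 t4 t5 : ℂ)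
    (hp : ‖p‖ < 1) (hq : ‖q‖ < 1) (hq0 : q ≠ 0)
    (h0 : t0 ≠ 0) (h1 : t1 ≠ 0) (h2 : t2 ≠ 0) (h3 : t3 ≠ 0) (h4 : t4 ≠ 0) (h5 : t5 ≠ 0)
    (hbal : t0 * t1 * t2 * t3 * t4 * t5 = q)
    (hterm : t4 * t5 = q⁻¹)
    (hd1 : theta (t5 ^ 2) p ≠ 0)
    (hd2 : theta (q * t5 / t0) p ≠ 0) (hd3 : theta (q * t5 / t1) p ≠ 0)
    (hd4 : theta (q * t5 / t2) p ≠ 0) (hd5 : theta (q * t5 / t3) p ≠ 0)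
    (hd6 : theta (q * t5 / t4) p ≠ 0) (hd7 : theta (q * t5 / t5) p ≠ 0)
    (hd8 : theta (q / (t1 * t2 * t3 * t5)) p ≠ 0) :
    1 + theta (t5 ^ 2 * q ^ 2) p / theta (t5 ^ 2) p *
        ((theta (t0 * t5) p / theta (q * t5 / t0) p) *
         (theta (t1 * t5) p / theta (q * t5 / t1) p) *
         (theta (t2 * t5) p / theta (q * t5 / t2) p) *
         (theta (t3 * t5) p / theta (q * t5 / t3) p) *
         (theta (t4 * t5) p / theta (q * t5 / t4) p) *
         (theta (t5 * t5) p / theta (q * t5 / t5) p)) * q =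
      theta (q * t5 ^ 2) p * theta (q / (t1 * t2)) p * theta (q / (t1 * t3)) p *
          theta (q / (t2 * t3)) p /
        (theta (q / (t1 * t2 * t3 * t5)) p * theta (q * t5 / t1) p *
          theta (q * t5 / t2) p * theta (q * t5 / t3) p) := by
  have ht4 : t4 = (q * t5)⁻¹ := by
    field_simp at hterm ⊢
    linear_combination hterm
  have ht0 : t0 = q ^ 2 / (t1 * t2 * t3) := by
    subst ht4
    field_simp at hbal ⊢
    linear_combination hbal
  subst ht0 ht4
  have hw : t1 * t2 * t3 * t5 / q ≠ 0 := by positivity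
  have e0 : q * t5 / (q ^ 2 / (t1 * t2 * t3)) = t1 * t2 * t3 * t5 / q := by field_simp
  have e4 : q * t5 / (q * t5)⁻¹ = t5 ^ 2 * q ^ 2 := by field_simp
  have e5 : q * t5 / t5 = q := by field_simp
  have e6 : q / (t1 * t2 * t3 * t5) = (t1 * t2 * t3 * t5 / q)⁻¹ := by field_simp
  have e7 : q ^ 2 / (t1 * t2 * t3) * t5 = q ^ 2 * t5 / (t1 * t2 * t3) := by ring
  rw [e0] at hd2
  rw [e4] at hd6
  rw [e5] at hd7
  rw [e0, e4, e5, e6, e7, hterm, ← pow_two t5, theta_inv hp hq0, theta_inv hp hw]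
  have h := theta_addition hp hq0 h5 h1 h2 h3
  generalize theta (q * t5 / t1) p = x1 at *
  generalize theta (q * t5 / t2) p = x2 at *
  generalize theta (q * t5 / t3) p = x3 at *
  field_simp at h ⊢
  linear_combination h
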